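/- Let F : (0,∞) → ℝ be nondecreasing and continuous from the right, and let φ : (0,∞) → (0,∞) be lower semicontinuous. Let (X,d) be a complete metric space and let T : X → X be a (φ,F)-contraction. Then T is a Meir-Keeler contraction. -/

import Mathlib

/-!
If `t = dist x y` is close to `ε` from the right and `ε ≤ dist (f x) (f y)`, then monotonicity of
`F` and the contraction inequality give `F ε ≤ F t - φ t`. As `t` decreases to `ε`, right
continuity of `F` and lower semicontinuity of `φ` bound the limit superior of the right-hand side
by `F ε - φ ε < F ε`, which is a contradiction on some interval `[ε, ε + δ)`.
-/

open Set Topology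

theorem eventually_lt_add_of_lowerSemicontinuousWithinAt {α : Type*} [TopologicalSpace α]
    {F φ : α → ℝ} {s : Set α} {a : α} (hF : ContinuousWithinAt F s a)
    (hφ : LowerSemicontinuousWithinAt φ s a) (hpos : 0 < φ a) :
    ∀ᶠ t in 𝓝[s] a, F t < F a + φ t := by
  have hsub : LowerSemicontinuousWithinAt (fun t => φ t + -F t) s a :=
    hφ.add hF.neg.lowerSemicontinuousWithinAt
  filter_upwards [hsub (-F a) (by linarith)] with t ht
  linarith

theorem eventually_nhdsGE_iff_exists_lt_add {p : ℝ → Prop} {a : ℝ} :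
    (∀ᶠ t in 𝓝[≥] a, p t) ↔ ∃ δ, 0 < δ ∧ ∀ t, a ≤ t → t < a + δ → p t := by
  refine mem_nhdsGE_iff_exists_Ico_subset.trans ⟨?_, ?_⟩
  · rintro ⟨u, hau, hu⟩
    exact ⟨u - a, sub_pos.mpr hau, fun t hat htu => hu ⟨hat, by linarith⟩⟩
  · rintro ⟨δ, hδ, h⟩
    exact ⟨a + δ, lt_add_of_pos_right a hδ, fun t ht => h t ht.1 ht.2⟩

section Contraction

variable {X Y : Type*} [PseudoMetricSpace X] [PseudoMetricSpace Y]

/-- The `(φ, F)`-contraction condition for maps between pseudometric spaces. Both distances are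
required to be positive, so that the values of `φ` and `F` outside `(0, ∞)` are irrelevant; for a
self-map of a metric space this amounts to the usual condition `f x ≠ f y`. -/
def IsPhiFContraction (φ F : ℝ → ℝ) (f : X → Y) : Prop :=
  ∀ x y, 0 < dist x y → 0 < dist (f x) (f y) →
    φ (dist x y) + F (dist (f x) (f y)) ≤ F (dist x y)

/-- The Meir–Keeler contraction condition, stated for maps between pseudometric spaces. -/
def IsMeirKeelerContraction (f : X → Y) : Prop :=
  ∀ ε : ℝ, 0 < ε → ∃ δ : ℝ, 0 < δ ∧ ∀ x y : X,
    ε ≤ dist x y → dist x y < ε + δ → dist (f x) (f y) < ε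

theorem isMeirKeelerContraction_iff_eventually {f : X → Y} :
    IsMeirKeelerContraction f ↔
      ∀ ε : ℝ, 0 < ε → ∀ᶠ t in 𝓝[≥] ε, ∀ x y, dist x y = t → dist (f x) (f y) < ε := by
  simp only [IsMeirKeelerContraction, eventually_nhdsGE_iff_exists_lt_add]
  refine forall₂_congr fun ε _ => exists_congr fun δ => and_congr_right fun _ => ⟨?_, ?_⟩
  · rintro h _ hge hlt x y rfl
    exact h x y hge hlt
  · exact fun h x y hge hlt => h _ hge hlt x y rfl

theorem IsPhiFContraction.dist_lt {φ F : ℝ → ℝ} {f : X → Y} (hf : IsPhiFContraction φ F f)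
    (hF : MonotoneOn F (Ioi 0)) {ε : ℝ} (hε : 0 < ε) {x y : X} (hxy : 0 < dist x y)
    (hlt : F (dist x y) < F ε + φ (dist x y)) : dist (f x) (f y) < ε := by
  by_contra! hge
  have hpos : 0 < dist (f x) (f y) := hε.trans_le hge
  have hmono : F ε ≤ F (dist (f x) (f y)) := hF hε hpos hge
  linarith [hf x y hxy hpos]

theorem stmt_7_general {φ F : ℝ → ℝ} {f : X → Y} (hF : MonotoneOn F (Ioi 0))
    (hFr : ∀ t, 0 < t → ContinuousWithinAt F (Ici t) t) (hφpos : ∀ t, 0 < t → 0 < φ t)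
    (hφr : ∀ t, 0 < t → LowerSemicontinuousWithinAt φ (Ici t) t)
    (hf : IsPhiFContraction φ F f) : IsMeirKeelerContraction f := by
  refine isMeirKeelerContraction_iff_eventually.mpr fun ε hε => ?_
  filter_upwards [eventually_lt_add_of_lowerSemicontinuousWithinAt (hFr ε hε) (hφr ε hε)
    (hφpos ε hε), self_mem_nhdsWithin] with t hlt hεt
  rintro x y rfl
  exact hf.dist_lt hF hε (hε.trans_le hεt) hlt

end Contraction

/-- Let `F : (0,∞) → ℝ` be nondecreasing and continuous from the right,
and `φ : (0,∞) → (0,∞)` lower semicontinuous. Then every `(φ,F)`-contraction on a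
complete metric space is a Meir-Keeler contraction. -/
theorem stmt_7 (F φ : ℝ → ℝ) (hF : ∀ s t : ℝ, 0 < s → s ≤ t → F s ≤ F t)
    (hFr : ∀ t : ℝ, 0 < t → Filter.Tendsto F (nhdsWithin t (Set.Ioi t)) (nhds (F t)))
    (hφpos : ∀ t : ℝ, 0 < t → 0 < φ t)
    (hφlsc : LowerSemicontinuousOn φ (Set.Ioi 0))
    {X : Type*} [MetricSpace X] [CompleteSpace X] (T : X → X)
    (hT : ∀ x y : X, T x ≠ T y →
      φ (dist x y) + F (dist (T x) (T y)) ≤ F (dist x y)) :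
    ∀ ε : ℝ, 0 < ε → ∃ δ : ℝ, 0 < δ ∧ ∀ x y : X,
      ε ≤ dist x y → dist x y < ε + δ → dist (T x) (T y) < ε :=
  stmt_7_general (fun s hs t _ hst => hF s t hs hst)
    (fun t ht => continuousWithinAt_Ioi_iff_Ici.mp (hFr t ht)) hφpos
    (fun t ht => (hφlsc t ht).mono (Ici_subset_Ioi.mpr ht))
    (fun x y _ hpos => hT x y (dist_pos.mp hpos))
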